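/- arXiv:0903.0156 — 4 statements merged into one kernel-verified Lean document; each statement's English description precedes it below -/
import Mathlib

section
/- For each i ≥ 0, the image under V of N^tmf_{8i} (the F_2-span of the monomials of T of weight 8i) is exactly M_bo(4i), the F_2-span of the monomials of B of weight at most 4i. (This identifies the image of the weight-8i component of H_* tmf with the i-th bo-Brown–Gitler module.) -/
open MvPolynomial

noncomputable section

/-- The dual Steenrod algebra at p = 2: the polynomial algebra `F₂[ζ₁, ζ₂, …]`
over `F₂ = ZMod 2` with variables indexed by the positive integers. -/
abbrev DualSteenrod : Type := MvPolynomial ℕ+ (ZMod 2)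

/-- The weight of the monomial `ζ^I`: `ω(ζ^I) = Σᵢ Iᵢ · 2^(i-1)`. -/
def wt (I : ℕ+ →₀ ℕ) : ℕ := I.sum fun i e => e * 2 ^ ((i : ℕ) - 1)

/-- The degree of the monomial `ζ^I`: `deg(ζ^I) = Σᵢ Iᵢ · (2^i − 1)`,
coming from the grading `deg(ζᵢ) = 2^i − 1`. -/
def degW (I : ℕ+ →₀ ℕ) : ℕ := I.sum fun i e => e * (2 ^ (i : ℕ) - 1)

/-- Exponent condition cutting out `T = H_* tmf`: `8 ∣ I₁`, `4 ∣ I₂`, `2 ∣ I₃`. -/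
def Tcond (I : ℕ+ →₀ ℕ) : Prop := 8 ∣ I 1 ∧ 4 ∣ I 2 ∧ 2 ∣ I 3

/-- Exponent condition cutting out `B = H_* bo`: `4 ∣ I₁`, `2 ∣ I₂`. -/
def Bcond (I : ℕ+ →₀ ℕ) : Prop := 4 ∣ I 1 ∧ 2 ∣ I 2

/-- Exponent condition cutting out `Z = H_* HZ`: `2 ∣ I₁`. -/
def Zcond (I : ℕ+ →₀ ℕ) : Prop := 2 ∣ I 1

/-- `T = H_* tmf`: the `F₂`-span of the monomials `ζ^I` with `8 ∣ I₁`, `4 ∣ I₂`, `2 ∣ I₃`. -/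
def Tsub : Submodule (ZMod 2) DualSteenrod :=
  Submodule.span (ZMod 2) {m | ∃ I, Tcond I ∧ m = monomial I (1 : ZMod 2)}

/-- `B = H_* bo`: the `F₂`-span of the monomials `ζ^I` with `4 ∣ I₁`, `2 ∣ I₂`. -/
def Bsub : Submodule (ZMod 2) DualSteenrod :=
  Submodule.span (ZMod 2) {m | ∃ I, Bcond I ∧ m = monomial I (1 : ZMod 2)}

/-- `Z = H_* HZ`: the `F₂`-span of the monomials `ζ^I` with `2 ∣ I₁`. -/
def Zsub : Submodule (ZMod 2) DualSteenrod :=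
  Submodule.span (ZMod 2) {m | ∃ I, Zcond I ∧ m = monomial I (1 : ZMod 2)}

/-- The `F₂`-algebra homomorphism `V : A → A` with `V(ζ₁) = 1` and
`V(ζᵢ) = ζ_{i−1}` for `i ≥ 2`. -/
def V : DualSteenrod →ₐ[ZMod 2] DualSteenrod :=
  aeval fun i : ℕ+ => if i = 1 then 1 else X (i - 1)

/-- `N^tmf_{8i}`: the `F₂`-span of the monomials of `T` of weight `8i`. -/
def Ntmf (i : ℕ) : Submodule (ZMod 2) DualSteenrod :=
  Submodule.span (ZMod 2) {m | ∃ I, Tcond I ∧ wt I = 8 * i ∧ m = monomial I (1 : ZMod 2)}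

/-- `N^bo_{4j}`: the `F₂`-span of the monomials of `B` of weight `4j`. -/
def Nbo (j : ℕ) : Submodule (ZMod 2) DualSteenrod :=
  Submodule.span (ZMod 2) {m | ∃ I, Bcond I ∧ wt I = 4 * j ∧ m = monomial I (1 : ZMod 2)}

/-- `N^Z_{2k}`: the `F₂`-span of the monomials of `Z` of weight `2k`. -/
def NZ (k : ℕ) : Submodule (ZMod 2) DualSteenrod :=
  Submodule.span (ZMod 2) {m | ∃ I, Zcond I ∧ wt I = 2 * k ∧ m = monomial I (1 : ZMod 2)}

/-- `M_bo(4i)`: the `F₂`-span of the monomials of `B` of weight at most `4i`. -/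
def Mbo (i : ℕ) : Submodule (ZMod 2) DualSteenrod :=
  Submodule.span (ZMod 2) {m | ∃ I, Bcond I ∧ wt I ≤ 4 * i ∧ m = monomial I (1 : ZMod 2)}

/-- `M_HZ(2j)`: the `F₂`-span of the monomials of `Z` of weight at most `2j`
(the homology of the `j`-th integral Brown–Gitler spectrum). -/
def MHZ (j : ℕ) : Submodule (ZMod 2) DualSteenrod :=
  Submodule.span (ZMod 2) {m | ∃ I, Zcond I ∧ wt I ≤ 2 * j ∧ m = monomial I (1 : ZMod 2)}

/-- The degree-`d` homogeneous part of `N^tmf_{8i}` (degrees taken in `ℤ`). -/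
def NtmfDeg (i : ℕ) (d : ℤ) : Submodule (ZMod 2) DualSteenrod :=
  Submodule.span (ZMod 2)
    {m | ∃ I, Tcond I ∧ wt I = 8 * i ∧ (degW I : ℤ) = d ∧ m = monomial I (1 : ZMod 2)}

/-- The degree-`d` homogeneous part of `M_bo(4i)` (degrees taken in `ℤ`). -/
def MboDeg (i : ℕ) (d : ℤ) : Submodule (ZMod 2) DualSteenrod :=
  Submodule.span (ZMod 2)
    {m | ∃ I, Bcond I ∧ wt I ≤ 4 * i ∧ (degW I : ℤ) = d ∧ m = monomial I (1 : ZMod 2)}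

/-- The degree-`d` homogeneous part of `N^bo_{4j}` (degrees taken in `ℤ`). -/
def NboDeg (j : ℕ) (d : ℤ) : Submodule (ZMod 2) DualSteenrod :=
  Submodule.span (ZMod 2)
    {m | ∃ I, Bcond I ∧ wt I = 4 * j ∧ (degW I : ℤ) = d ∧ m = monomial I (1 : ZMod 2)}

/-- The degree-`d` homogeneous part of `M_HZ(2j)` (degrees taken in `ℤ`). -/
def MHZdeg (j : ℕ) (d : ℤ) : Submodule (ZMod 2) DualSteenrod :=
  Submodule.span (ZMod 2)
    {m | ∃ I, Zcond I ∧ wt I ≤ 2 * j ∧ (degW I : ℤ) = d ∧ m = monomial I (1 : ZMod 2)}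

/-- The degree-`d` homogeneous part of `T` (degrees taken in `ℤ`). -/
def Tdeg (d : ℤ) : Submodule (ZMod 2) DualSteenrod :=
  Submodule.span (ZMod 2)
    {m | ∃ I, Tcond I ∧ (degW I : ℤ) = d ∧ m = monomial I (1 : ZMod 2)}

/-
Write every exponent vector as `(a, J)`, so that its monomial is `ζ₁^a` times `ζ^J` with all indices
raised by one. Then `V` sends this monomial to `ζ^J`, its weight is `a + 2 ω(J)`, and it lies in `T`
exactly when `8 ∣ a` and `ζ^J ∈ B`. So `ζ^J ∈ B` is hit from weight `8i` precisely when
`a = 8i - 2 ω(J)` is nonnegative and divisible by `8`; the divisibility is automatic because the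
weight of a monomial of `B` is divisible by `4`.
-/

section ConsExp

variable {M : Type*} [AddCommMonoid M]

/-- The exponent vector `(a, J₁, J₂, …)`: `a` in position `1` followed by `J` shifted up by one.
It is the analogue over `ℕ+` of `Finsupp.cons`, and splits the power of `ζ₁` off a monomial. -/
def consExp (a : M) (J : ℕ+ →₀ M) : ℕ+ →₀ M :=
  Finsupp.single 1 a + J.embDomain (addRightEmbedding 1)

theorem embDomain_addRightEmbedding_one_apply_one (J : ℕ+ →₀ M) :
    J.embDomain (addRightEmbedding 1) 1 = 0 := by
  refine Finsupp.embDomain_of_notMem_range _ _ _ ?_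
  rintro ⟨i, hi⟩
  exact (PNat.lt_add_left 1 i).ne' hi

@[simp]
theorem consExp_one (a : M) (J : ℕ+ →₀ M) : consExp a J 1 = a := by
  simp [consExp, embDomain_addRightEmbedding_one_apply_one]

@[simp]
theorem consExp_add_one (a : M) (J : ℕ+ →₀ M) (i : ℕ+) : consExp a J (i + 1) = J i := by
  have shift_apply : J.embDomain (addRightEmbedding 1) (i + 1) = J i :=
    Finsupp.embDomain_apply_self (addRightEmbedding 1) J i
  have ne_one : i + 1 ≠ 1 := (PNat.lt_add_left 1 i).ne'
  rw [consExp, Finsupp.add_apply, shift_apply, Finsupp.single_eq_of_ne ne_one, zero_add]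

theorem exists_eq_consExp (I : ℕ+ →₀ M) : ∃ a J, I = consExp a J := by
  refine ⟨I 1, I.comapDomain (· + 1) (add_left_injective 1).injOn, ?_⟩
  ext i
  cases i using PNat.recOn with
  | one => rw [consExp_one]
  | succ i => rw [consExp_add_one, Finsupp.comapDomain_apply]

@[to_additive]
theorem prod_consExp {N : Type*} [CommMonoid N] {h : ℕ+ → M → N} (h_zero : h 1 0 = 1)
    (a : M) (J : ℕ+ →₀ M) :
    (consExp a J).prod h = h 1 a * J.prod fun i => h (i + 1) := by
  have disjoint_support : Disjoint (Finsupp.single 1 a).support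
      (J.embDomain (addRightEmbedding 1)).support :=
    Finset.disjoint_of_subset_left Finsupp.support_single_subset <|
      Finset.disjoint_singleton_left.mpr <|
        Finsupp.notMem_support_iff.mpr (embDomain_addRightEmbedding_one_apply_one J)
  rw [consExp, Finsupp.prod_add_index_of_disjoint disjoint_support,
    Finsupp.prod_single_index h_zero, Finsupp.prod_embDomain]
  rfl

end ConsExp

theorem aeval_monomial_consExp {R S : Type*} [CommSemiring R] [CommSemiring S] [Algebra R S]
    (f : ℕ+ → S) (a : ℕ) (J : ℕ+ →₀ ℕ) (r : R) :
    aeval f (monomial (consExp a J) r) =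
      f 1 ^ a * aeval (fun i => f (i + 1)) (monomial J r) := by
  rw [aeval_monomial, aeval_monomial, prod_consExp (h := fun i k => f i ^ k) (pow_zero _),
    mul_left_comm]

theorem V_monomial_consExp (a : ℕ) (J : ℕ+ →₀ ℕ) (r : ZMod 2) :
    V (monomial (consExp a J) r) = monomial J r := by
  have ne_one (i : ℕ+) : i + 1 ≠ 1 := (PNat.lt_add_left 1 i).ne'
  have add_sub_one (i : ℕ+) : i + 1 - 1 = i := PNat.add_sub
  rw [V, aeval_monomial_consExp]
  simp only [if_true, one_pow, one_mul, ne_one, if_false, add_sub_one, aeval_X_left,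
    AlgHom.id_apply]

theorem wt_consExp (a : ℕ) (J : ℕ+ →₀ ℕ) : wt (consExp a J) = a + 2 * wt J := by
  have wt_shift : (J.sum fun i e => e * 2 ^ (((i + 1 : ℕ+) : ℕ) - 1)) = 2 * wt J := by
    rw [wt, Finsupp.mul_sum]
    refine Finsupp.sum_congr fun i _ => ?_
    rw [PNat.add_coe, PNat.one_coe, Nat.add_sub_cancel, ← mul_pow_sub_one i.ne_zero, mul_left_comm]
  rw [wt, sum_consExp (zero_mul _), wt_shift]
  simp

theorem Tcond_consExp_iff {a : ℕ} {J : ℕ+ →₀ ℕ} : Tcond (consExp a J) ↔ 8 ∣ a ∧ Bcond J := by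
  have at_two : consExp a J 2 = J 1 := consExp_add_one a J 1
  have at_three : consExp a J 3 = J 2 := consExp_add_one a J 2
  rw [Tcond, Bcond, consExp_one, at_two, at_three]

theorem Bcond_consExp_consExp_iff {a b : ℕ} {J : ℕ+ →₀ ℕ} :
    Bcond (consExp a (consExp b J)) ↔ 4 ∣ a ∧ 2 ∣ b := by
  have at_two : consExp a (consExp b J) 2 = consExp b J 1 := consExp_add_one a _ 1
  rw [Bcond, consExp_one, at_two, consExp_one]

theorem Bcond.four_dvd_wt {J : ℕ+ →₀ ℕ} (hJ : Bcond J) : 4 ∣ wt J := by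
  obtain ⟨a, J, rfl⟩ := exists_eq_consExp J
  obtain ⟨b, J, rfl⟩ := exists_eq_consExp J
  obtain ⟨ha, hb⟩ := Bcond_consExp_consExp_iff.mp hJ
  rw [wt_consExp, wt_consExp]
  omega

theorem exists_Tcond_consExp_and_wt_eq_iff {i : ℕ} {J : ℕ+ →₀ ℕ} :
    (∃ a, Tcond (consExp a J) ∧ wt (consExp a J) = 8 * i) ↔ Bcond J ∧ wt J ≤ 4 * i := by
  simp only [Tcond_consExp_iff, wt_consExp]
  constructor
  · rintro ⟨a, ⟨-, hJ⟩, hwt⟩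
    exact ⟨hJ, by omega⟩
  · rintro ⟨hJ, hwt⟩
    have four_dvd : 4 ∣ wt J := hJ.four_dvd_wt
    exact ⟨8 * i - 2 * wt J, ⟨by omega, hJ⟩, by omega⟩

/-- For each `i ≥ 0`, the image under `V` of `N^tmf_{8i}` is exactly `M_bo(4i)`. -/
theorem V_image_Ntmf_eq_Mbo :
    ∀ i : ℕ, Submodule.map V.toLinearMap (Ntmf i) = Mbo i := by
  intro i
  rw [Ntmf, Mbo, Submodule.map_span]
  congr 1
  ext m
  constructor
  · rintro ⟨_, ⟨I, hT, hwt, rfl⟩, rfl⟩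
    obtain ⟨a, J, rfl⟩ := exists_eq_consExp I
    obtain ⟨hB, hle⟩ := exists_Tcond_consExp_and_wt_eq_iff.mp ⟨a, hT, hwt⟩
    exact ⟨J, hB, hle, V_monomial_consExp a J 1⟩
  · rintro ⟨J, hB, hle, rfl⟩
    obtain ⟨a, hT, hwt⟩ := exists_Tcond_consExp_and_wt_eq_iff.mpr ⟨hB, hle⟩
    exact ⟨_, ⟨consExp a J, hT, hwt, rfl⟩, V_monomial_consExp a J 1⟩
end
end

section
/- For each i ≥ 0 and each degree d, the map V restricts to an F_2-linear isomorphism from the degree-d homogeneous part of N^tmf_{8i} (the F_2-span of the monomials of T of weight 8i) onto the degree-(d − 8i) homogeneous part of M_bo(4i) (the F_2-span of the monomials of B of weight at most 4i). In other words, as graded F_2-vector spaces N^tmf_{8i} ≅ Σ^{8i} M_bo(4i), where Σ^{8i} denotes an upward shift of the grading by 8i. -/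
open MvPolynomial

noncomputable section

/-!
On monomials `V` is the shift of exponents `(I₁, I₂, …) ↦ (I₂, I₃, …)`, under which
`ω(I) = I₁ + 2 ω(tail I)` and `deg I = ω(I) + deg (tail I)`. Hence, among exponents of fixed weight
`8i`, the tail `J` determines `I₁ = 8i - 2 ω(J)` and has degree smaller by `8i`. The tail of a
monomial of `T` is a monomial of `B`; conversely `4 ∣ ω(J)` for every monomial of `B`, so the
recovered `I₁` is automatically divisible by `8`, and it is nonnegative exactly when `ω(J) ≤ 4i`.
Thus `V` is a bijection between the monomial bases of the two sides.
-/

section Span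

variable {R M N ι : Type*} [Semiring R] [AddCommMonoid M] [AddCommMonoid N] [Module R M]
  [Module R N]

theorem injOn_span_image_of_linearIndepOn_comp {f : M →ₗ[R] N} {v : ι → M} {s : Set ι}
    (h : LinearIndepOn R (f ∘ v) s) : Set.InjOn f (Submodule.span R (v '' s)) := by
  intro x hx y hy hxy
  obtain ⟨a, ha, rfl⟩ := (Finsupp.mem_span_image_iff_linearCombination R).1 hx
  obtain ⟨b, hb, rfl⟩ := (Finsupp.mem_span_image_iff_linearCombination R).1 hy
  rw [Finsupp.apply_linearCombination, Finsupp.apply_linearCombination] at hxy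
  rw [linearIndepOn_iffₛ.1 h a ha b hb hxy]

end Span

section PNatIndexed

/-- The shifted sequence `(a₂, a₃, …)` of a finitely supported sequence `(a₁, a₂, …)`. -/
def pnatTail {M : Type*} [Zero M] (a : ℕ+ →₀ M) : ℕ+ →₀ M :=
  a.comapDomain (· + 1) (add_left_injective 1).injOn

@[simp]
theorem pnatTail_apply {M : Type*} [Zero M] (a : ℕ+ →₀ M) (j : ℕ+) :
    pnatTail a j = a (j + 1) := rfl

variable {M : Type*} [AddCommMonoid M]

/-- The sequence `(x, a₁, a₂, …)`, inverse to splitting a sequence into its first entry and its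
`pnatTail`. -/
def pnatCons (x : M) (a : ℕ+ →₀ M) : ℕ+ →₀ M :=
  Finsupp.single 1 x + a.mapDomain (· + 1)

@[simp]
theorem pnatCons_one (x : M) (a : ℕ+ →₀ M) : pnatCons x a 1 = x := by
  have h : (1 : ℕ+) ∉ Set.range (· + 1 : ℕ+ → ℕ+) := fun ⟨j, hj⟩ => (PNat.lt_add_left 1 j).ne' hj
  simp [pnatCons, Finsupp.mapDomain_of_notMem_range _ _ h]

@[simp]
theorem pnatCons_add_one (x : M) (a : ℕ+ →₀ M) (j : ℕ+) : pnatCons x a (j + 1) = a j := by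
  simp [pnatCons, Finsupp.mapDomain_apply (add_left_injective (1 : ℕ+)),
    Finsupp.single_eq_of_ne (PNat.lt_add_left 1 j).ne']

@[simp]
theorem pnatTail_pnatCons (x : M) (a : ℕ+ →₀ M) : pnatTail (pnatCons x a) = a := by
  ext j
  simp

theorem pnatCons_pnatTail (a : ℕ+ →₀ M) : pnatCons (a 1) (pnatTail a) = a := by
  ext j
  cases j using PNat.recOn <;> simp

@[to_additive]
theorem prod_eq_mul_prod_pnatTail {N : Type*} [CommMonoid N] (a : ℕ+ →₀ M) {h : ℕ+ → M → N}
    (h_zero : ∀ j, h j 0 = 1) (h_add : ∀ j x y, h j (x + y) = h j x * h j y) :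
    a.prod h = h 1 (a 1) * (pnatTail a).prod fun j x => h (j + 1) x := by
  conv_lhs => rw [← pnatCons_pnatTail a, pnatCons]
  rw [Finsupp.prod_add_index' h_zero h_add, Finsupp.prod_single_index (h_zero 1),
    Finsupp.prod_mapDomain_index (fun j => h_zero j) (fun j => h_add j)]

end PNatIndexed

theorem wt_eq_sum_pnatTail (I : ℕ+ →₀ ℕ) :
    wt I = I 1 + (pnatTail I).sum fun j e => e * 2 ^ (j : ℕ) := by
  rw [wt, sum_eq_add_sum_pnatTail I (by simp) (by intros; ring)]
  simp

theorem wt_eq_add_two_mul_wt_pnatTail (I : ℕ+ →₀ ℕ) : wt I = I 1 + 2 * wt (pnatTail I) := by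
  rw [wt_eq_sum_pnatTail, wt, Finsupp.mul_sum]
  congr 1
  refine Finsupp.sum_congr fun j _ => ?_
  rw [mul_left_comm, mul_pow_sub_one j.ne_zero]

theorem degW_eq_wt_add_degW_pnatTail (I : ℕ+ →₀ ℕ) : degW I = wt I + degW (pnatTail I) := by
  have two_pow_succ_sub_one (n : ℕ) : 2 ^ (n + 1) - 1 = 2 ^ n + (2 ^ n - 1) := by
    have := Nat.one_le_two_pow (n := n)
    omega
  rw [degW, sum_eq_add_sum_pnatTail I (by simp) (by intros; ring),
    wt_eq_sum_pnatTail, degW, add_assoc, ← Finsupp.sum_add]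
  simp [two_pow_succ_sub_one, mul_add]

theorem tcond_iff_bcond_pnatTail (I : ℕ+ →₀ ℕ) : Tcond I ↔ 8 ∣ I 1 ∧ Bcond (pnatTail I) :=
  Iff.rfl

/-- The exponents of the monomials of `T` of weight `8i` and degree `d`, i.e. of the monomial basis
of `NtmfDeg i d`. -/
def ntmfExponents (i : ℕ) (d : ℤ) : Set (ℕ+ →₀ ℕ) :=
  {I | Tcond I ∧ wt I = 8 * i ∧ (degW I : ℤ) = d}

/-- The exponents of the monomials of `B` of weight at most `4i` and degree `d`, i.e. of the
monomial basis of `MboDeg i d`. -/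
def mboExponents (i : ℕ) (d : ℤ) : Set (ℕ+ →₀ ℕ) :=
  {J | Bcond J ∧ wt J ≤ 4 * i ∧ (degW J : ℤ) = d}

theorem mapsTo_pnatTail_ntmfExponents (i : ℕ) (d : ℤ) :
    Set.MapsTo pnatTail (ntmfExponents i d) (mboExponents i (d - 8 * i)) := by
  rintro I ⟨hT, hwt, hdeg⟩
  have hwt_tail := wt_eq_add_two_mul_wt_pnatTail I
  have hdeg_tail := degW_eq_wt_add_degW_pnatTail I
  exact ⟨((tcond_iff_bcond_pnatTail I).1 hT).2, by omega, by omega⟩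

theorem injOn_pnatTail_setOf_wt_eq (w : ℕ) : Set.InjOn pnatTail {I | wt I = w} := by
  intro I (hI : wt I = w) I' (hI' : wt I' = w) h
  have h_one : I 1 = I' 1 := by
    rw [wt_eq_add_two_mul_wt_pnatTail] at hI hI'
    rw [h] at hI
    omega
  rw [← pnatCons_pnatTail I, ← pnatCons_pnatTail I', h_one, h]

theorem surjOn_pnatTail_ntmfExponents (i : ℕ) (d : ℤ) :
    Set.SurjOn pnatTail (ntmfExponents i d) (mboExponents i (d - 8 * i)) := by
  rintro J ⟨hB, hwt, hdeg⟩
  have h_four := hB.four_dvd_wt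
  set I := pnatCons (8 * i - 2 * wt J) J
  have h_one : I 1 = 8 * i - 2 * wt J := pnatCons_one _ _
  have h_tail : pnatTail I = J := pnatTail_pnatCons _ _
  have hwt_I : wt I = 8 * i := by
    rw [wt_eq_add_two_mul_wt_pnatTail, h_one, h_tail]
    omega
  have hdeg_I : (degW I : ℤ) = d := by
    rw [degW_eq_wt_add_degW_pnatTail, hwt_I, h_tail]
    omega
  have hT : Tcond I := by
    rw [tcond_iff_bcond_pnatTail, h_one, h_tail]
    exact ⟨by omega, hB⟩
  exact ⟨I, ⟨hT, hwt_I, hdeg_I⟩, h_tail⟩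

theorem bijOn_pnatTail_ntmfExponents (i : ℕ) (d : ℤ) :
    Set.BijOn pnatTail (ntmfExponents i d) (mboExponents i (d - 8 * i)) :=
  ⟨mapsTo_pnatTail_ntmfExponents i d,
    (injOn_pnatTail_setOf_wt_eq (8 * i)).mono fun _ ⟨_, hwt, _⟩ => hwt,
    surjOn_pnatTail_ntmfExponents i d⟩

theorem V_monomial (I : ℕ+ →₀ ℕ) (r : ZMod 2) :
    V (monomial I r) = monomial (pnatTail I) r := by
  have add_one_ne_one (j : ℕ+) : j + 1 ≠ 1 := (PNat.lt_add_left 1 j).ne'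
  rw [V, aeval_monomial,
    prod_eq_mul_prod_pnatTail I (fun _ => pow_zero _) (fun _ _ _ => pow_add _ _ _),
    monomial_eq (s := pnatTail I)]
  simp [add_one_ne_one, PNat.add_sub, algebraMap_eq]

theorem map_V_span_monomial_image (s : Set (ℕ+ →₀ ℕ)) :
    (Submodule.span (ZMod 2) ((monomial · (1 : ZMod 2)) '' s)).map V.toLinearMap =
      Submodule.span (ZMod 2) ((monomial · (1 : ZMod 2)) '' (pnatTail '' s)) := by
  simp only [Submodule.map_span, Set.image_image, AlgHom.toLinearMap_apply, V_monomial]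

theorem injOn_V_span_monomial_image {s : Set (ℕ+ →₀ ℕ)} (hs : Set.InjOn pnatTail s) :
    Set.InjOn V (Submodule.span (ZMod 2) ((monomial · (1 : ZMod 2)) '' s)) := by
  refine injOn_span_image_of_linearIndepOn_comp (f := V.toLinearMap) ?_
  have hV : V.toLinearMap ∘ (monomial · (1 : ZMod 2)) = basisMonomials ℕ+ (ZMod 2) ∘ pnatTail := by
    ext1 I
    simp [V_monomial]
  rw [hV]
  exact (basisMonomials ℕ+ (ZMod 2)).linearIndependent.comp _ hs.injective

theorem ntmfDeg_eq_span (i : ℕ) (d : ℤ) :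
    NtmfDeg i d = Submodule.span (ZMod 2) ((monomial · (1 : ZMod 2)) '' ntmfExponents i d) := by
  simp only [NtmfDeg, ntmfExponents, Set.image, Set.mem_ofPred_eq, and_assoc, eq_comm]

theorem mboDeg_eq_span (i : ℕ) (d : ℤ) :
    MboDeg i d = Submodule.span (ZMod 2) ((monomial · (1 : ZMod 2)) '' mboExponents i d) := by
  simp only [MboDeg, mboExponents, Set.image, Set.mem_ofPred_eq, and_assoc, eq_comm]

/-- For each `i` and each degree `d`, `V` restricts to an `F₂`-linear isomorphism from
the degree-`d` part of `N^tmf_{8i}` onto the degree-`(d − 8i)` part of `M_bo(4i)`: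
the image is exactly the target, and the restriction is injective.
Hence `N^tmf_{8i} ≅ Σ^{8i} M_bo(4i)` as graded `F₂`-vector spaces. -/
theorem Ntmf_iso_suspension_Mbo :
    ∀ (i : ℕ) (d : ℤ),
      Submodule.map V.toLinearMap (NtmfDeg i d) = MboDeg i (d - 8 * i) ∧
      (∀ x ∈ NtmfDeg i d, ∀ y ∈ NtmfDeg i d, V x = V y → x = y) := by
  intro i d
  have h_bij := bijOn_pnatTail_ntmfExponents i d
  rw [ntmfDeg_eq_span, mboDeg_eq_span]
  constructor
  · rw [map_V_span_monomial_image, h_bij.image_eq]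
  · intro x hx y hy hxy
    exact injOn_V_span_monomial_image h_bij.injOn hx hy hxy
end
end

section
/- If m and m' are monomials of B with equal weight ω(m) = ω(m') and V(m) = V(m'), then m = m'. In particular, for each j ≥ 0 the restriction of V to N^bo_{4j} (the F_2-span of the monomials of B of weight 4j) is an injective F_2-linear map. -/
open MvPolynomial

noncomputable section

/-!
Setting one variable, whose weight has infinite additive order, equal to `1` loses no information
about a weighted homogeneous polynomial of known weight: the lost exponent of that variable is
recovered from the weight. Up to the injective relabelling `ζᵢ ↦ ζᵢ₊₁`, the map `V` sets `ζ₁`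
equal to `1`.
-/

section Dehomogenize

variable {σ M R : Type*} [CommSemiring R] {w : σ → M} {i : σ}

lemma weight_eq_nsmul_add_weight_erase [AddCommMonoid M] (w : σ → M) (i : σ) (I : σ →₀ ℕ) :
    Finsupp.weight w I = I i • w i + Finsupp.weight w (I.erase i) := by
  rw [← Finsupp.weight_single, ← map_add, Finsupp.single_add_erase]

lemma erase_injOn_weight_eq [AddCancelCommMonoid M] (hi : ¬IsOfFinAddOrder (w i)) (n : M) :
    Set.InjOn (Finsupp.erase i) {I : σ →₀ ℕ | Finsupp.weight w I = n} := by
  intro I hI J hJ hIJ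
  have hweight : Finsupp.weight w I = Finsupp.weight w J := hI.trans hJ.symm
  rw [weight_eq_nsmul_add_weight_erase w i I, weight_eq_nsmul_add_weight_erase w i J, hIJ,
    add_left_inj] at hweight
  have hexp : I i = J i := injective_nsmul_iff_not_isOfFinAddOrder.mpr hi hweight
  rw [← Finsupp.single_add_erase i I, ← Finsupp.single_add_erase i J, hexp, hIJ]

variable (R) in
open Classical in
/-- Dehomogenization with respect to the variable `X i`: the substitution `X i = 1`. The result
is kept in the same polynomial ring, where `X i` no longer occurs. -/
def dehomogenize (i : σ) : MvPolynomial σ R →ₐ[R] MvPolynomial σ R :=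
  aeval (Function.update X i 1)

lemma dehomogenize_X_self (i : σ) : dehomogenize R i (X i) = 1 := by
  simp [dehomogenize]

lemma dehomogenize_X_of_ne {j : σ} (hj : j ≠ i) : dehomogenize R i (X j) = X j := by
  simp [dehomogenize, hj]

lemma dehomogenize_monomial (i : σ) (I : σ →₀ ℕ) (c : R) :
    dehomogenize R i (monomial I c) = monomial (I.erase i) c := by
  classical
  have hprod : (I.erase i).prod (fun j e ↦ (Function.update X i 1 j : MvPolynomial σ R) ^ e) =
      (I.erase i).prod fun j e ↦ X j ^ e :=
    Finsupp.prod_congr fun j hj ↦ by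
      have hji : j ≠ i := by
        rintro rfl
        simp at hj
      rw [Function.update_of_ne hji]
  rw [dehomogenize, aeval_monomial, ← Finsupp.mul_prod_erase' I i _ fun _ ↦ pow_zero _, hprod,
    Function.update_self, one_pow, one_mul, monomial_eq, algebraMap_eq]

lemma coeff_erase_dehomogenize [AddCancelCommMonoid M] (hi : ¬IsOfFinAddOrder (w i)) {n : M}
    {p : MvPolynomial σ R} (hp : IsWeightedHomogeneous w p n) {I : σ →₀ ℕ}
    (hI : Finsupp.weight w I = n) :
    coeff (I.erase i) (dehomogenize R i p) = coeff I p := by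
  classical
  have hother : ∀ J ∈ p.support, J ≠ I → coeff (I.erase i) (monomial (J.erase i) (coeff J p)) = 0 :=
    fun J hJ hJI ↦ by
      rw [coeff_monomial, if_neg]
      exact fun h ↦ hJI (erase_injOn_weight_eq hi n (hp (mem_support_iff.mp hJ)) hI h)
  conv_lhs => rw [p.as_sum]
  simp only [map_sum, dehomogenize_monomial, coeff_sum]
  rw [Finset.sum_eq_single I hother fun hIp ↦ by simp [notMem_support_iff.mp hIp],
    coeff_monomial, if_pos rfl]

theorem dehomogenize_injOn_weightedHomogeneousSubmodule [AddCancelCommMonoid M]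
    (hi : ¬IsOfFinAddOrder (w i)) (n : M) :
    Set.InjOn (dehomogenize R i) (weightedHomogeneousSubmodule R w n) := by
  intro p hp q hq hpq
  ext I
  by_cases hI : Finsupp.weight w I = n
  · rw [← coeff_erase_dehomogenize hi hp hI, hpq, coeff_erase_dehomogenize hi hq hI]
  · rw [hp.coeff_eq_zero I hI, hq.coeff_eq_zero I hI]

end Dehomogenize

/-- The weights `ω(ζᵢ) = 2^(i-1)` of the generators, in the form expected by Mathlib's weighted
homogeneous polynomials. -/
def zetaWeight (i : ℕ+) : ℕ := 2 ^ ((i : ℕ) - 1)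

lemma weight_zetaWeight (I : ℕ+ →₀ ℕ) : Finsupp.weight zetaWeight I = wt I := rfl

lemma isWeightedHomogeneous_zetaWeight_monomial (I : ℕ+ →₀ ℕ) (c : ZMod 2) :
    IsWeightedHomogeneous zetaWeight (monomial I c) (wt I) :=
  isWeightedHomogeneous_monomial zetaWeight I c (weight_zetaWeight I)

lemma Nbo_le_weightedHomogeneousSubmodule (j : ℕ) :
    Nbo j ≤ weightedHomogeneousSubmodule (ZMod 2) zetaWeight (4 * j) := by
  refine Submodule.span_le.mpr ?_
  rintro _ ⟨I, -, hI, rfl⟩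
  exact hI ▸ isWeightedHomogeneous_zetaWeight_monomial I 1

lemma rename_add_one_comp_V : (rename (· + 1)).comp V = dehomogenize (ZMod 2) (1 : ℕ+) := by
  refine algHom_ext fun i ↦ ?_
  rcases eq_or_ne i 1 with rfl | hi
  · simp [V, dehomogenize_X_self]
  · obtain ⟨k, rfl⟩ := PNat.exists_eq_succ_of_ne_one hi
    simp [V, dehomogenize_X_of_ne hi, hi]

theorem V_injective_on_weight_components_of_B_general (n : ℕ) :
    Set.InjOn V (weightedHomogeneousSubmodule (ZMod 2) zetaWeight n) := by
  have hone : ¬IsOfFinAddOrder (zetaWeight 1) :=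
    not_isOfFinAddOrder_of_isAddTorsionFree (pow_ne_zero _ two_ne_zero)
  intro x hx y hy hxy
  apply dehomogenize_injOn_weightedHomogeneousSubmodule hone n hx hy
  rw [← rename_add_one_comp_V, AlgHom.comp_apply, AlgHom.comp_apply, hxy]

/-- Monomials of `B` with equal weight and equal image under `V` coincide;
in particular `V` is injective on each `N^bo_{4j}`. -/
theorem V_injective_on_weight_components_of_B :
    (∀ I I' : ℕ+ →₀ ℕ, Bcond I → Bcond I' → wt I = wt I' →
      V (monomial I (1 : ZMod 2)) = V (monomial I' (1 : ZMod 2)) →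
      monomial I (1 : ZMod 2) = monomial I' (1 : ZMod 2)) ∧
    (∀ j : ℕ, ∀ x ∈ Nbo j, ∀ y ∈ Nbo j, V x = V y → x = y) := by
  refine ⟨fun I I' _ _ hwt hV ↦ ?_, fun j x hx y hy hV ↦ ?_⟩
  · exact V_injective_on_weight_components_of_B_general (wt I')
      (hwt ▸ isWeightedHomogeneous_zetaWeight_monomial I 1)
      (isWeightedHomogeneous_zetaWeight_monomial I' 1) hV
  · exact V_injective_on_weight_components_of_B_general (4 * j)
      (Nbo_le_weightedHomogeneousSubmodule j hx) (Nbo_le_weightedHomogeneousSubmodule j hy) hV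
end
end

section
/- For each j ≥ 0, the image under V of N^bo_{4j} (the F_2-span of the monomials of B of weight 4j) is exactly M_HZ(2j), the F_2-span of the monomials of Z of weight at most 2j; moreover, for each degree d, V restricts to an F_2-linear isomorphism from the degree-d part of N^bo_{4j} onto the degree-(d − 4j) part of M_HZ(2j). In other words, as graded F_2-vector spaces N^bo_{4j} ≅ Σ^{4j} M_HZ(2j). (M_HZ(2j) is the homology of the j-th integral Brown–Gitler spectrum.) -/
open MvPolynomial

noncomputable section

/-! `V` sends `ζ^I` to `ζ^{tail I}`, where `tail I = (I₂, I₃, …)`, so everything reduces to a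
bijection between sets of exponents. Since `ω(I) = I₁ + 2 ω(tail I)`, an exponent of given weight
`4j` is determined by its tail, and the possible tails are the `J` with `ω(J) ≤ 2j`. If `J₁ = I₂` is
even then so is `ω(J)`, whence `4 ∣ I₁ = 4j - 2 ω(J)` is automatic: the conditions defining `B` at
weight `4j` amount to the one defining `Z` on the tail. Finally `2^i - 1 = 2^(i-1) + (2^(i-1) - 1)`
gives `deg(I) = ω(I) + deg(tail I)`, so degrees drop by exactly `4j`. -/

theorem span_monomial_eq_restrictSupport {R σ : Type*} [CommSemiring R] (P : (σ →₀ ℕ) → Prop) :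
    Submodule.span R {m | ∃ I, P I ∧ m = monomial I (1 : R)} = restrictSupport R {I | P I} := by
  simp only [restrictSupport_eq_span, Set.image, Set.mem_ofPred_eq, eq_comm]

section MapDomain

open AddMonoidAlgebra

variable (R S : Type*) {M N : Type*} [Semiring R] [Semiring S] [Module R S]

theorem map_mapDomainLinearMap_supported (f : M → N) (s : Set M) :
    (supported R S s).map (mapDomainLinearMap R S f) = supported R S (f '' s) := by
  rw [supported_eq_map, supported_eq_map, ← Finsupp.lmapDomain_supported, ← Submodule.map_comp,
    ← Submodule.map_comp]
  rfl

theorem injOn_mapDomainLinearMap_supported {f : M → N} {s : Set M} (hf : Set.InjOn f s) :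
    Set.InjOn (mapDomainLinearMap R S f) (supported R S s) :=
  fun _ hp _ hq hpq =>
    coeff_injective <| Finsupp.mapDomain_injOn s hf hp hq <| congrArg AddMonoidAlgebra.coeff hpq

end MapDomain

/-- The exponent `(I₂, I₃, …)` obtained from `I = (I₁, I₂, …)` by dropping the first entry. It is
additive in `I`, so that it induces an algebra homomorphism on polynomials. -/
def exponentTail : (ℕ+ →₀ ℕ) →+ (ℕ+ →₀ ℕ) :=
  Finsupp.comapDomain.addMonoidHom (add_left_injective 1)

/-- The exponent `(n, J₁, J₂, …)` obtained from `J` by inserting `n` as first entry: the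
exponents with tail `J` are exactly these. -/
def exponentCons (n : ℕ) (J : ℕ+ →₀ ℕ) : ℕ+ →₀ ℕ :=
  Finsupp.single 1 n + J.mapDomain (· + 1)

theorem one_notMem_range_add_one : (1 : ℕ+) ∉ Set.range (· + 1 : ℕ+ → ℕ+) := by
  rintro ⟨i, hi⟩
  exact (PNat.lt_add_left 1 i).ne' hi

theorem exponent_ext {I I' : ℕ+ →₀ ℕ} (head : I 1 = I' 1)
    (tail : exponentTail I = exponentTail I') : I = I' := by
  ext i
  induction i using PNat.recOn with
  | one => exact head
  | succ i _ => exact DFunLike.congr_fun tail i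

theorem exponentCons_one (n : ℕ) (J : ℕ+ →₀ ℕ) : exponentCons n J 1 = n := by
  simp [exponentCons, Finsupp.mapDomain_of_notMem_range J 1 one_notMem_range_add_one]

theorem exponentTail_single_one (n : ℕ) : exponentTail (Finsupp.single 1 n) = 0 :=
  Finsupp.comapDomain_single_of_not_mem_range one_notMem_range_add_one n _

theorem exponentTail_single_add_one (i : ℕ+) (n : ℕ) :
    exponentTail (Finsupp.single (i + 1) n) = Finsupp.single i n :=
  Finsupp.comapDomain_single _ i n _

theorem exponentTail_exponentCons (n : ℕ) (J : ℕ+ →₀ ℕ) :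
    exponentTail (exponentCons n J) = J := by
  rw [exponentCons, map_add, exponentTail_single_one, zero_add]
  exact Finsupp.comapDomain_mapDomain _ (add_left_injective 1) J

theorem exponentCons_head_tail (I : ℕ+ →₀ ℕ) : exponentCons (I 1) (exponentTail I) = I :=
  exponent_ext (exponentCons_one _ _) (exponentTail_exponentCons _ _)

theorem sum_mul_eq_head_add_tail (w : ℕ+ → ℕ) (I : ℕ+ →₀ ℕ) :
    (I.sum fun i e => e * w i) =
      I 1 * w 1 + (exponentTail I).sum fun i e => e * w (i + 1) := by
  conv_lhs => rw [← exponentCons_head_tail I, exponentCons]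
  rw [Finsupp.sum_add_index' (by simp) (by intros; ring), Finsupp.sum_single_index (by simp),
    Finsupp.sum_mapDomain_index (by simp) (by intros; ring)]

theorem wt_eq_head_add_two_mul_wt_tail (I : ℕ+ →₀ ℕ) :
    wt I = I 1 + 2 * wt (exponentTail I) := by
  have weight_succ (i : ℕ+) : 2 ^ ((i + 1 : ℕ+) - 1 : ℕ) = 2 * 2 ^ ((i : ℕ) - 1) := by
    rw [PNat.add_coe, PNat.one_coe, Nat.add_sub_cancel, mul_pow_sub_one i.ne_zero]
  simp only [wt, sum_mul_eq_head_add_tail _ I, weight_succ, PNat.one_coe, Nat.sub_self, pow_zero,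
    mul_one, Finsupp.mul_sum, mul_left_comm]

theorem degW_eq_wt_add_degW_tail (I : ℕ+ →₀ ℕ) :
    degW I = wt I + degW (exponentTail I) := by
  have two_pow_sub_one (i : ℕ+) :
      2 ^ (i : ℕ) - 1 = 2 ^ ((i : ℕ) - 1) + (2 ^ ((i : ℕ) - 1) - 1) := by
    have := mul_pow_sub_one i.ne_zero 2
    have := Nat.one_le_two_pow (n := (i : ℕ) - 1)
    omega
  calc degW I = wt I + I.sum fun i e => e * (2 ^ ((i : ℕ) - 1) - 1) := by
        simp only [degW, wt, two_pow_sub_one, mul_add, Finsupp.sum_add]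
    _ = wt I + degW (exponentTail I) := by
        simp [sum_mul_eq_head_add_tail _ I, degW]

theorem V_eq_mapDomainAlgHom :
    V = AddMonoidAlgebra.mapDomainAlgHom (ZMod 2) (ZMod 2) exponentTail := by
  refine MvPolynomial.algHom_ext fun i => ?_
  have image_X (k : ℕ+) : AddMonoidAlgebra.mapDomainAlgHom (ZMod 2) (ZMod 2) exponentTail (X k) =
      monomial (exponentTail (Finsupp.single k 1)) (1 : ZMod 2) :=
    AddMonoidAlgebra.mapDomain_single
  rw [V, aeval_X, image_X]
  induction i using PNat.recOn with
  | one => rw [if_pos rfl, exponentTail_single_one, monomial_zero', C_1]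
  | succ i _ =>
    rw [if_neg fun h => one_notMem_range_add_one ⟨i, h⟩, PNat.add_sub,
      exponentTail_single_add_one, X]

theorem map_V_restrictSupport (s : Set (ℕ+ →₀ ℕ)) :
    (restrictSupport (ZMod 2) s).map V.toLinearMap =
      restrictSupport (ZMod 2) (exponentTail '' s) := by
  rw [V_eq_mapDomainAlgHom]
  exact map_mapDomainLinearMap_supported _ _ exponentTail s

theorem injOn_V_restrictSupport {s : Set (ℕ+ →₀ ℕ)} (hs : Set.InjOn exponentTail s) :
    Set.InjOn V (restrictSupport (ZMod 2) s) := by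
  rw [V_eq_mapDomainAlgHom]
  exact injOn_mapDomainLinearMap_supported _ _ hs

theorem bijOn_exponentTail_wt (n : ℕ) :
    Set.BijOn exponentTail {I | wt I = n} {J | 2 * wt J ≤ n} := by
  have mapsTo : Set.MapsTo exponentTail {I | wt I = n} {J | 2 * wt J ≤ n} := by
    rintro I rfl
    exact (Nat.le_add_left _ _).trans_eq (wt_eq_head_add_two_mul_wt_tail I).symm
  have injOn : Set.InjOn exponentTail {I | wt I = n} := by
    intro I (hI : wt I = n) I' (hI' : wt I' = n) tail_eq
    rw [wt_eq_head_add_two_mul_wt_tail] at hI hI'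
    rw [← tail_eq] at hI'
    exact exponent_ext (Nat.add_right_cancel (hI.trans hI'.symm)) tail_eq
  have surjOn : Set.SurjOn exponentTail {I | wt I = n} {J | 2 * wt J ≤ n} := by
    intro J (hJ : 2 * wt J ≤ n)
    refine ⟨exponentCons (n - 2 * wt J) J, ?_, exponentTail_exponentCons _ J⟩
    rw [Set.mem_ofPred_eq, wt_eq_head_add_two_mul_wt_tail, exponentCons_one,
      exponentTail_exponentCons, Nat.sub_add_cancel hJ]
  exact ⟨mapsTo, injOn, surjOn⟩

theorem Zcond.two_dvd_wt {J : ℕ+ →₀ ℕ} (hJ : Zcond J) : 2 ∣ wt J := by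
  rw [wt_eq_head_add_two_mul_wt_tail]
  exact dvd_add hJ (dvd_mul_right 2 _)

theorem Bcond_iff_Zcond_exponentTail {I : ℕ+ →₀ ℕ} (hI : 4 ∣ wt I) :
    Bcond I ↔ Zcond (exponentTail I) := by
  refine ⟨fun h => h.2, fun h => ⟨?_, h⟩⟩
  have := wt_eq_head_add_two_mul_wt_tail I
  have := h.two_dvd_wt
  omega

theorem bijOn_exponentTail_Bcond (j : ℕ) :
    Set.BijOn exponentTail {I | Bcond I ∧ wt I = 4 * j} {J | Zcond J ∧ wt J ≤ 2 * j} := by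
  have target_subset : {J | Zcond J ∧ wt J ≤ 2 * j} ⊆ {J | 2 * wt J ≤ 4 * j} :=
    fun J hJ => show 2 * wt J ≤ 4 * j by have := hJ.2; omega
  convert (bijOn_exponentTail_wt (4 * j)).subset_right target_subset using 1
  ext I
  have := wt_eq_head_add_two_mul_wt_tail I
  constructor
  · rintro ⟨hB, hw⟩
    exact ⟨hw, (Bcond_iff_Zcond_exponentTail ⟨j, hw⟩).1 hB, by omega⟩
  · rintro ⟨hw, hZ, -⟩
    exact ⟨(Bcond_iff_Zcond_exponentTail ⟨j, hw⟩).2 hZ, hw⟩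

theorem bijOn_exponentTail_Bcond_degW (j : ℕ) (d : ℤ) :
    Set.BijOn exponentTail {I | Bcond I ∧ wt I = 4 * j ∧ (degW I : ℤ) = d}
      {J | Zcond J ∧ wt J ≤ 2 * j ∧ (degW J : ℤ) = d - 4 * j} := by
  convert (bijOn_exponentTail_Bcond j).subset_right
    (r := {J | Zcond J ∧ wt J ≤ 2 * j ∧ (degW J : ℤ) = d - 4 * j})
    (fun J hJ => ⟨hJ.1, hJ.2.1⟩) using 1
  ext I
  have := degW_eq_wt_add_degW_tail I
  constructor
  · rintro ⟨hB, hw, hd⟩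
    have hZ := (bijOn_exponentTail_Bcond j).mapsTo ⟨hB, hw⟩
    exact ⟨⟨hB, hw⟩, hZ.1, hZ.2, by omega⟩
  · rintro ⟨⟨hB, hw⟩, -, -, hd⟩
    exact ⟨hB, hw, by omega⟩

theorem Nbo_eq_restrictSupport (j : ℕ) :
    Nbo j = restrictSupport (ZMod 2) {I | Bcond I ∧ wt I = 4 * j} := by
  simp only [Nbo, ← span_monomial_eq_restrictSupport, and_assoc]

theorem MHZ_eq_restrictSupport (j : ℕ) :
    MHZ j = restrictSupport (ZMod 2) {J | Zcond J ∧ wt J ≤ 2 * j} := by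
  simp only [MHZ, ← span_monomial_eq_restrictSupport, and_assoc]

theorem NboDeg_eq_restrictSupport (j : ℕ) (d : ℤ) :
    NboDeg j d = restrictSupport (ZMod 2) {I | Bcond I ∧ wt I = 4 * j ∧ (degW I : ℤ) = d} := by
  simp only [NboDeg, ← span_monomial_eq_restrictSupport, and_assoc]

theorem MHZdeg_eq_restrictSupport (j : ℕ) (d : ℤ) :
    MHZdeg j d = restrictSupport (ZMod 2) {J | Zcond J ∧ wt J ≤ 2 * j ∧ (degW J : ℤ) = d} := by
  simp only [MHZdeg, ← span_monomial_eq_restrictSupport, and_assoc]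

/-- For each `j ≥ 0`, the image under `V` of `N^bo_{4j}` is exactly `M_HZ(2j)`, and for
each degree `d`, `V` restricts to an `F₂`-linear isomorphism from the degree-`d` part of
`N^bo_{4j}` onto the degree-`(d − 4j)` part of `M_HZ(2j)`.
Hence `N^bo_{4j} ≅ Σ^{4j} M_HZ(2j)` as graded `F₂`-vector spaces. -/
theorem Nbo_iso_suspension_MHZ :
    ∀ j : ℕ,
      Submodule.map V.toLinearMap (Nbo j) = MHZ j ∧
      ∀ d : ℤ,
        Submodule.map V.toLinearMap (NboDeg j d) = MHZdeg j (d - 4 * j) ∧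
        (∀ x ∈ NboDeg j d, ∀ y ∈ NboDeg j d, V x = V y → x = y) := by
  intro j
  refine ⟨?_, fun d => ⟨?_, ?_⟩⟩
  · rw [Nbo_eq_restrictSupport, map_V_restrictSupport, (bijOn_exponentTail_Bcond j).image_eq,
      MHZ_eq_restrictSupport]
  · rw [NboDeg_eq_restrictSupport, map_V_restrictSupport,
      (bijOn_exponentTail_Bcond_degW j d).image_eq, MHZdeg_eq_restrictSupport]
  · rw [NboDeg_eq_restrictSupport]
    intro x hx y hy hxy
    exact injOn_V_restrictSupport (bijOn_exponentTail_Bcond_degW j d).injOn hx hy hxy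
end
end
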